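/- Identify each tuple (b₀, b₁, …, b_q) of n×n real matrices with a point of ℝ^{n²(q+1)} and with the polynomial matrix b(z) = b₀ + b₁z + ⋯ + b_q z^q. Let S ⊆ ℝ^{n²(q+1)} be the set of tuples for which det b(z) ≠ 0 for all complex z with |z| = 1; S is open. There exists a subset U ⊆ S, open and dense in S, such that every b ∈ U admits a Wiener–Hopf factorisation b(z) = p(z) s(z) f(z) whose partial indices are of type (κ,k), i.e. s(z) = diag(z^{κ+1},…,z^{κ+1}, z^{κ},…,z^{κ}) with the first k entries z^{κ+1} and the last n−k entries z^{κ}, for some integers satisfying either 0 ≤ κ ≤ q−1 and k ∈ {0,…,n−1}, or (κ,k) = (q,0). -/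

import Mathlib

open Polynomial Matrix

/-- Evaluation of a real polynomial matrix at a complex point (entrywise). -/
noncomputable def evalMat {n : ℕ} (M : Matrix (Fin n) (Fin n) (Polynomial ℝ)) (z : ℂ) :
    Matrix (Fin n) (Fin n) ℂ :=
  M.map (fun r => Polynomial.aeval z r)

/-- A polynomial matrix viewed as a matrix over the field of real rational functions. -/
noncomputable def polyToRat {n : ℕ} (M : Matrix (Fin n) (Fin n) (Polynomial ℝ)) :
    Matrix (Fin n) (Fin n) (RatFunc ℝ) :=
  M.map (algebraMap (Polynomial ℝ) (RatFunc ℝ))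

/-- The rational matrix F(1/z) obtained from a polynomial matrix F by substituting 1/z. -/
noncomputable def invSub {n : ℕ} (F : Matrix (Fin n) (Fin n) (Polynomial ℝ)) :
    Matrix (Fin n) (Fin n) (RatFunc ℝ) :=
  F.map (fun r => Polynomial.aeval ((RatFunc.X : RatFunc ℝ)⁻¹) r)

/-- The diagonal matrix diag(z^{κ₁},…,z^{κₙ}) over ℝ(z). -/
noncomputable def sMat (n : ℕ) (κ : Fin n → ℤ) : Matrix (Fin n) (Fin n) (RatFunc ℝ) :=
  Matrix.diagonal (fun i => (RatFunc.X : RatFunc ℝ) ^ (κ i))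

/-- `IsWHF b p F κ` : b(z) = p(z) · diag(z^{κᵢ}) · F(1/z) is a Wiener–Hopf factorisation. -/
structure IsWHF {n : ℕ} (b p F : Matrix (Fin n) (Fin n) (Polynomial ℝ))
    (κ : Fin n → ℤ) : Prop where
  p_noZero : ∀ z : ℂ, ‖z‖ ≤ 1 → (evalMat p z).det ≠ 0
  F_noZero : ∀ w : ℂ, ‖w‖ ≤ 1 → (evalMat F w).det ≠ 0
  anti : ∀ i j : Fin n, i ≤ j → κ j ≤ κ i
  eq : polyToRat b = polyToRat p * sMat n κ * invSub F

/-- Partial indices of type (κ,k): the first k indices equal κ+1, the rest κ. -/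
def idx (n : ℕ) (κ k : ℕ) : Fin n → ℤ := fun i => if (i : ℕ) < k then (κ : ℤ) + 1 else (κ : ℤ)

/-- The polynomial matrix b₀ + b₁ z + ⋯ + b_q z^q built from the coefficient tuple c. -/
noncomputable def polyOf {n q : ℕ} (c : Fin (q + 1) → Matrix (Fin n) (Fin n) ℝ) :
    Matrix (Fin n) (Fin n) (Polynomial ℝ) :=
  Matrix.of fun i j => ∑ l : Fin (q + 1), Polynomial.C (c l i j) * Polynomial.X ^ (l : ℕ)

/-!
Write the factorisation as `b = p * g` with `g(z) = s(z) f(z)` a polynomial matrix, normalised so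
that column `j` of `g` is `z ^ d j` times the `j`-th unit vector plus terms of lower degree. As the
`d j` differ by at most one, row `i` of such a `g` has degree at most `d i`, so `z ^ (-d i)` times
this row is polynomial in `1 / z`.

Openness: multiplication `(p, g) ↦ p * g` is a map between coefficient spaces of equal dimension,
and its derivative `(P, W) ↦ P * g + p * W` is injective because `det p` and `det g` are coprime.

Density: generically the cokernel of `b` is cyclic, that is, up to multiples of `det b` the columns
of the adjugate are multiples of one vector `a`. Let `χ` be the monic factor of `det b` with the
zeros inside the disc. A factor `g` with determinant `χ` and column degrees `d` exists as soon as
reducing `v ⬝ᵥ a` modulo `χ`, for row vectors `v` with `deg v j < d j`, is bijective. This may fail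
for `a`, but it holds for `a + t a'` with a suitable `a'` and all but finitely many `t`; for small
`t` one can perturb `b` so that it annihilates `a + t a'` modulo `χ`.
-/

section Families

variable {Θ : Type*} [TopologicalSpace Θ]

/-- A family of real polynomials with continuous coefficients and bounded degree, encoded as the
specialisations of one polynomial over the ring of continuous functions. -/
def IsContinuousFamily (f : Θ → ℝ[X]) : Prop :=
  ∃ F : C(Θ, ℝ)[X], ∀ θ, F.map (ContinuousMap.evalAlgHom ℝ ℝ θ).toRingHom = f θ

lemma isContinuousFamily_const (χ : ℝ[X]) : IsContinuousFamily fun _ : Θ => χ :=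
  ⟨χ.map (algebraMap ℝ C(Θ, ℝ)), fun θ => by
    rw [Polynomial.map_map]
    exact Polynomial.map_id⟩

namespace IsContinuousFamily

variable {f g : Θ → ℝ[X]}

lemma add (hf : IsContinuousFamily f) (hg : IsContinuousFamily g) :
    IsContinuousFamily fun θ => f θ + g θ := by
  obtain ⟨F, hF⟩ := hf
  obtain ⟨G, hG⟩ := hg
  exact ⟨F + G, fun θ => by rw [Polynomial.map_add, hF, hG]⟩

lemma reflect (hf : IsContinuousFamily f) (N : ℕ) :
    IsContinuousFamily fun θ => (f θ).reflect N := by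
  obtain ⟨F, hF⟩ := hf
  exact ⟨F.reflect N, fun θ => by simp only [← reflect_map, hF]⟩

lemma divByMonic (hf : IsContinuousFamily f) {χ : ℝ[X]} (hχ : χ.Monic) :
    IsContinuousFamily fun θ => f θ /ₘ χ := by
  obtain ⟨F, hF⟩ := hf
  refine ⟨F /ₘ χ.map (algebraMap ℝ C(Θ, ℝ)), fun θ => ?_⟩
  rw [map_divByMonic _ (hχ.map _), hF, Polynomial.map_map]
  exact congrArg _ Polynomial.map_id

lemma det {ι : Type*} [Fintype ι] [DecidableEq ι] {M : Θ → Matrix ι ι ℝ[X]}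
    (hM : ∀ i j, IsContinuousFamily fun θ => M θ i j) :
    IsContinuousFamily fun θ => (M θ).det := by
  choose F hF using hM
  refine ⟨(Matrix.of F).det, fun θ => ?_⟩
  rw [← coe_mapRingHom, RingHom.map_det]
  congr 1
  ext1 i j
  exact hF i j θ

lemma continuous_aeval (hf : IsContinuousFamily f) :
    Continuous fun x : Θ × ℂ => aeval x.2 (f x.1) := by
  obtain ⟨F, hF⟩ := hf
  have hsum : ∀ x : Θ × ℂ, aeval x.2 (f x.1) =
      ∑ l ∈ Finset.range (F.natDegree + 1), ((F.coeff l x.1 : ℝ) : ℂ) * x.2 ^ l := fun x => by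
    rw [← hF, aeval_def, eval₂_map, eval₂_eq_sum_range]
    rfl
  simp only [hsum]
  refine continuous_finsetSum _ fun l _ => ?_
  refine Continuous.mul (Complex.continuous_ofReal.comp ?_) (continuous_snd.pow l)
  exact (F.coeff l).continuous.comp continuous_fst

lemma isOpen_forall_aeval_ne_zero (hf : IsContinuousFamily f) {K : Set ℂ} (hK : IsCompact K) :
    IsOpen {θ | ∀ z ∈ K, aeval z (f θ) ≠ 0} :=
  isOpen_iff_mem_nhds.mpr fun _ h => hK.eventually_forall_of_forall_eventually fun z hz =>
    hf.continuous_aeval.continuousAt.eventually_ne (h z hz)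

end IsContinuousFamily

lemma isContinuousFamily_ofFn {m : ℕ} {v : Θ → Fin m → ℝ} (hv : Continuous v) :
    IsContinuousFamily fun θ => ofFn m (v θ) := by
  classical
  refine ⟨ofFn m fun l => ⟨fun θ => v θ l, (continuous_apply l).comp hv⟩, fun θ => ?_⟩
  ext l
  rw [coeff_map]
  rcases lt_or_ge l m with hl | hl
  · rw [ofFn_coeff_eq_val_of_lt _ hl, ofFn_coeff_eq_val_of_lt _ hl]
    rfl
  · rw [ofFn_coeff_eq_zero_of_ge _ hl, ofFn_coeff_eq_zero_of_ge _ hl, map_zero]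

end Families

section Reflection

variable {R ι : Type*} [CommRing R]

lemma reflect_prod (s : Finset ι) (f : ι → R[X]) (d : ι → ℕ)
    (h : ∀ i ∈ s, (f i).natDegree ≤ d i) :
    (∏ i ∈ s, f i).reflect (∑ i ∈ s, d i) = ∏ i ∈ s, (f i).reflect (d i) := by
  classical
  induction s using Finset.induction_on with
  | empty => simp [reflect_one]
  | insert a s ha ih =>
    have hs : ∀ i ∈ s, (f i).natDegree ≤ d i := fun i hi => h i (Finset.mem_insert_of_mem hi)
    rw [Finset.prod_insert ha, Finset.sum_insert ha, Finset.prod_insert ha, ← ih hs]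
    exact reflect_mul _ _ (h a (Finset.mem_insert_self a s))
      ((natDegree_prod_le s f).trans (Finset.sum_le_sum hs))

/-- The matrix of the coefficients of `z ^ (rᵢ + sⱼ)` of a polynomial matrix whose entries have
degree at most `rᵢ + sⱼ`; it governs the behaviour of `g` at infinity. -/
def leadingMatrix (r s : ι → ℕ) (g : Matrix ι ι R[X]) : Matrix ι ι R :=
  Matrix.of fun i j => (g i j).coeff (r i + s j)

/-- The polynomial matrix `diag(w ^ rᵢ) g(1/w) diag(w ^ sⱼ)`, for entries of `g` of degree at most
`rᵢ + sⱼ`. -/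
noncomputable def reflectMatrix (r s : ι → ℕ) (g : Matrix ι ι R[X]) : Matrix ι ι R[X] :=
  Matrix.of fun i j => (g i j).reflect (r i + s j)

variable [Fintype ι]

lemma sum_add_perm (σ : Equiv.Perm ι) (r s : ι → ℕ) :
    ∑ i, (r (σ i) + s i) = ∑ i, (r i + s i) := by
  rw [Finset.sum_add_distrib, Finset.sum_add_distrib, Equiv.sum_comp]

variable [DecidableEq ι] {r s : ι → ℕ} {g : Matrix ι ι R[X]}

lemma natDegree_det_le_sum (hg : ∀ i j, (g i j).natDegree ≤ r i + s j) :
    g.det.natDegree ≤ ∑ i, (r i + s i) := by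
  rw [Matrix.det_apply]
  refine natDegree_sum_le_of_forall_le _ _ fun σ _ => (natDegree_smul_le _ _).trans ?_
  rw [← sum_add_perm σ]
  exact (natDegree_prod_le _ _).trans (Finset.sum_le_sum fun i _ => hg (σ i) i)

lemma det_reflectMatrix (hg : ∀ i j, (g i j).natDegree ≤ r i + s j) :
    (reflectMatrix r s g).det = g.det.reflect (∑ i, (r i + s i)) := by
  ext m
  simp only [Matrix.det_apply, coeff_reflect, finsetSum_coeff, coeff_smul]
  refine Finset.sum_congr rfl fun σ _ => ?_
  rw [← sum_add_perm σ, ← coeff_reflect, reflect_prod _ _ _ fun i _ => hg (σ i) i]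
  rfl

lemma coeff_sum_det (hg : ∀ i j, (g i j).natDegree ≤ r i + s j) :
    g.det.coeff (∑ i, (r i + s i)) = (leadingMatrix r s g).det := by
  have hzero : (reflectMatrix r s g).map (constantCoeff (R := R)) = leadingMatrix r s g := by
    ext i j
    simp [reflectMatrix, leadingMatrix, coeff_reflect]
  rw [← hzero, ← RingHom.mapMatrix_apply, ← RingHom.map_det, det_reflectMatrix hg,
    constantCoeff_apply, coeff_reflect, revAt_zero]

lemma aeval_reflect {K : Type*} [Field K] [Algebra R K] {w : K} (hw : w ≠ 0) {N : ℕ} {f : R[X]}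
    (hf : f.natDegree ≤ N) : aeval w⁻¹ (f.reflect N) * w ^ N = aeval w f := by
  let _ := invertibleOfNonzero hw
  simpa [aeval_def] using eval₂_reflect_mul_pow (algebraMap R K) w N f hf

end Reflection

lemma aeval_reflect_ne_zero_iff {f : ℝ[X]} {N : ℕ} (hf : f.natDegree ≤ N) :
    (∀ w : ℂ, ‖w‖ ≤ 1 → aeval w (f.reflect N) ≠ 0) ↔
      f.coeff N ≠ 0 ∧ ∀ z : ℂ, 1 ≤ ‖z‖ → aeval z f ≠ 0 := by
  have hzero : aeval (0 : ℂ) (f.reflect N) = f.coeff N := by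
    rw [← coeff_zero_eq_aeval_zero', coeff_reflect, revAt_zero]
    rfl
  refine ⟨fun h => ⟨fun h0 => h 0 (by simp) (by simp [hzero, h0]), fun z hz => ?_⟩,
    fun ⟨h0, h⟩ w hw => ?_⟩
  · have hz0 : z ≠ 0 := norm_pos_iff.mp (by linarith)
    rw [← aeval_reflect hz0 hf]
    exact mul_ne_zero (h _ (by simpa using inv_le_one_of_one_le₀ hz)) (pow_ne_zero _ hz0)
  · rcases eq_or_ne w 0 with rfl | hw0
    · rw [hzero]
      exact_mod_cast h0
    · have hw' : 1 ≤ ‖w⁻¹‖ := by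
        simpa using (one_le_inv₀ (norm_pos_iff.mpr hw0)).mpr hw
      have := h _ hw'
      rw [← aeval_reflect (inv_ne_zero hw0) hf, inv_inv] at this
      exact left_ne_zero_of_mul this

section RowDivision

variable {R ι : Type*} [CommRing R] [Fintype ι] [DecidableEq ι]

lemma degree_lt_of_degree_vecMul_lt [IsDomain R] {r s : ι → ℕ} {g : Matrix ι ι R[X]}
    (hg : ∀ i j, (g i j).natDegree ≤ r i + s j) (hdet : (leadingMatrix r s g).det ≠ 0)
    {x : ι → R[X]} {q : ℕ} (hx : ∀ j, ((x ᵥ* g) j).degree < (q + s j : ℕ)) (i : ι) :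
    (x i).degree < (q - r i : ℕ) := by
  by_contra hi
  have hxi : x i ≠ 0 := by
    rintro h0
    exact hi (by simp [h0, bot_lt_iff_ne_bot])
  classical
  obtain ⟨t, ht, hmax⟩ := (Finset.univ.filter fun i => x i ≠ 0).exists_max_image
    (fun i => (x i).natDegree + r i) ⟨i, by simp [hxi]⟩
  simp only [Finset.mem_filter, Finset.mem_univ, true_and] at ht hmax
  set m := (x t).natDegree + r t with hm
  have hqm : q ≤ m := by
    have h1 := hmax i hxi
    rw [not_lt, degree_eq_natDegree hxi, Nat.cast_le] at hi
    omega
  have hlead : (fun i => (x i).coeff (m - r i)) ᵥ* leadingMatrix r s g = 0 := by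
    ext1 j
    have h0 : ((x ᵥ* g) j).coeff (m + s j) = 0 :=
      coeff_eq_zero_of_degree_lt ((hx j).trans_le (by exact_mod_cast (by omega)))
    simp only [Matrix.vecMul, dotProduct, finsetSum_coeff] at h0
    rw [Pi.zero_apply, ← h0]
    refine Finset.sum_congr rfl fun i _ => ?_
    rcases eq_or_ne (x i) 0 with h | h
    · simp [h]
    · have := hmax i h
      rw [show m + s j = (m - r i) + (r i + s j) by omega,
        coeff_mul_add_eq_of_natDegree_le (by omega) (hg i j)]
      rfl
  have hzero := congrFun (Matrix.eq_zero_of_vecMul_eq_zero hdet hlead) t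
  simp only [hm, add_tsub_cancel_right, Pi.zero_apply, coeff_natDegree,
    leadingCoeff_eq_zero] at hzero
  exact ht hzero

lemma exists_degree_sub_vecMul_lt {d : ι → ℕ} {g : Matrix ι ι R[X]}
    (hg : ∀ i j, (g i j).natDegree ≤ d j) (hdet : IsUnit (leadingMatrix 0 d g).det) {m : ℕ}
    {v : ι → R[X]} (hv : ∀ j, (v j).degree < (d j + (m + 1) : ℕ)) :
    ∃ x : ι → R[X], ∀ j, ((v - x ᵥ* g) j).degree < (d j + m : ℕ) := by
  obtain ⟨y, hy⟩ : ∃ y, y ᵥ* leadingMatrix 0 d g = fun j => (v j).coeff (d j + m) :=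
    ⟨_ ᵥ* (leadingMatrix 0 d g)⁻¹, by
      rw [Matrix.vecMul_vecMul, Matrix.nonsing_inv_mul _ hdet, Matrix.vecMul_one]⟩
  refine ⟨fun i => C (y i) * X ^ m, fun j => ?_⟩
  have hterm : ∀ i, (C (y i) * X ^ m * g i j).natDegree ≤ m + d j := fun i =>
    natDegree_mul_le_of_le (natDegree_C_mul_X_pow_le _ _) (hg i j)
  rw [degree_lt_iff_coeff_zero]
  intro l hl
  simp only [Pi.sub_apply, Matrix.vecMul, dotProduct, coeff_sub, finsetSum_coeff]
  rcases hl.eq_or_lt with rfl | hl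
  · have hyj := congrFun hy j
    simp only [Matrix.vecMul, dotProduct] at hyj
    rw [← hyj, ← Finset.sum_sub_distrib]
    refine Finset.sum_eq_zero fun i _ => ?_
    rw [mul_assoc, coeff_C_mul, coeff_X_pow_mul]
    simp [leadingMatrix]
  · rw [coeff_eq_zero_of_degree_lt ((hv j).trans_le (by exact_mod_cast (by omega))),
      Finset.sum_eq_zero fun i _ => coeff_eq_zero_of_natDegree_lt ((hterm i).trans_lt
        (by omega)), sub_zero]

lemma exists_eq_vecMul_add {d : ι → ℕ} {g : Matrix ι ι R[X]}
    (hg : ∀ i j, (g i j).natDegree ≤ d j) (hdet : IsUnit (leadingMatrix 0 d g).det)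
    (v : ι → R[X]) :
    ∃ x r : ι → R[X], (∀ j, (r j).degree < d j) ∧ v = x ᵥ* g + r := by
  suffices H : ∀ (m : ℕ) (v : ι → R[X]), (∀ j, (v j).degree < (d j + m : ℕ)) →
      ∃ x r : ι → R[X], (∀ j, (r j).degree < d j) ∧ v = x ᵥ* g + r by
    refine H (∑ j, (v j).natDegree + 1) v fun j => ?_
    have hj : (v j).natDegree ≤ ∑ j, (v j).natDegree :=
      Finset.single_le_sum (f := fun j => (v j).natDegree) (fun _ _ => Nat.zero_le _)
        (Finset.mem_univ j)
    exact degree_le_natDegree.trans_lt (by exact_mod_cast (by omega))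
  intro m
  induction m with
  | zero => exact fun v hv => ⟨0, v, hv, by simp⟩
  | succ m ih =>
    intro v hv
    obtain ⟨y, hy⟩ := exists_degree_sub_vecMul_lt hg hdet hv
    obtain ⟨x, r, hr, hx⟩ := ih _ hy
    exact ⟨y + x, r, hr, by rw [Matrix.add_vecMul, add_assoc, ← hx, add_sub_cancel]⟩

end RowDivision

section ColumnMonic

variable {R ι : Type*} [CommRing R] [DecidableEq ι]

/-- `g = diag(z ^ dⱼ) + W` with the entries of the `j`-th column of `W` of degree below `dⱼ`. -/
def IsColumnMonic (d : ι → ℕ) (g : Matrix ι ι R[X]) : Prop :=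
  ∀ i j, (g i j - Matrix.diagonal (fun j => (X : R[X]) ^ d j) i j).degree < d j

namespace IsColumnMonic

variable {d : ι → ℕ} {g : Matrix ι ι R[X]}

lemma coeff_eq (hg : IsColumnMonic d g) (i : ι) {j : ι} {m : ℕ} (hm : d j ≤ m) :
    (g i j).coeff m = if i = j ∧ m = d j then 1 else 0 := by
  have h := coeff_eq_zero_of_degree_lt ((hg i j).trans_le (Nat.cast_le.mpr hm))
  rw [coeff_sub, sub_eq_zero] at h
  rw [h]
  by_cases hij : i = j
  · simp [hij, coeff_X_pow]
  · simp [hij]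

lemma natDegree_le (hg : IsColumnMonic d g) (i j : ι) : (g i j).natDegree ≤ d j :=
  natDegree_le_iff_coeff_eq_zero.mpr fun m hm => by
    rw [hg.coeff_eq i hm.le, if_neg fun h => hm.ne' h.2]

lemma leadingMatrix_eq_one (hg : IsColumnMonic d g) : leadingMatrix 0 d g = 1 := by
  ext i j
  simp [leadingMatrix, hg.coeff_eq i (j := j) le_rfl, Matrix.one_apply]

variable [Fintype ι]

lemma natDegree_det_le (hg : IsColumnMonic d g) : g.det.natDegree ≤ ∑ j, d j := by
  simpa using natDegree_det_le_sum (r := 0) (by simpa using hg.natDegree_le)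

lemma coeff_det (hg : IsColumnMonic d g) : g.det.coeff (∑ j, d j) = 1 := by
  have := coeff_sum_det (r := 0) (s := d) (g := g) (by simpa using hg.natDegree_le)
  simpa [hg.leadingMatrix_eq_one] using this

lemma monic_det (hg : IsColumnMonic d g) : g.det.Monic :=
  monic_of_natDegree_le_of_coeff_eq_one _ hg.natDegree_det_le hg.coeff_det

lemma natDegree_det [Nontrivial R] (hg : IsColumnMonic d g) : g.det.natDegree = ∑ j, d j :=
  hg.natDegree_det_le.antisymm (le_natDegree_of_ne_zero (by simp [hg.coeff_det]))

end IsColumnMonic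

end ColumnMonic

section BalancedFactorization

/-- The partial indices of type `(κ, k)` as natural numbers. -/
def balancedIdx (n κ k : ℕ) : Fin n → ℕ := fun i => if (i : ℕ) < k then κ + 1 else κ

variable {n κ k : ℕ}

lemma idx_eq_balancedIdx (i : Fin n) : idx n κ k i = balancedIdx n κ k i := by
  unfold idx balancedIdx
  split_ifs <;> simp

lemma balancedIdx_antitone : Antitone (balancedIdx n κ k) := by
  intro i j hij
  have : (i : ℕ) ≤ j := hij
  unfold balancedIdx
  split_ifs <;> omega

lemma balancedIdx_le_succ (i j : Fin n) : balancedIdx n κ k j ≤ balancedIdx n κ k i + 1 := by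
  unfold balancedIdx
  split_ifs <;> omega

lemma balancedIdx_le {q : ℕ} (h : (κ < q ∧ k < n) ∨ (κ = q ∧ k = 0)) (i : Fin n) :
    balancedIdx n κ k i ≤ q := by
  unfold balancedIdx
  split_ifs <;> omega

lemma sum_balancedIdx (h : k ≤ n) : ∑ i, balancedIdx n κ k i = n * κ + k := by
  have hsplit : ∀ i : Fin n, balancedIdx n κ k i = κ + if (i : ℕ) < k then 1 else 0 := by
    intro i
    unfold balancedIdx
    split_ifs <;> rfl
  simp [hsplit, Finset.sum_add_distrib, Fin.card_filter_val_lt, h]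

lemma exists_sum_balancedIdx_eq {q N : ℕ} (hN : N ≤ n * q) :
    ∃ κ k, ((κ < q ∧ k < n) ∨ (κ = q ∧ k = 0)) ∧ ∑ i, balancedIdx n κ k i = N := by
  rcases hN.eq_or_lt with rfl | hlt
  · exact ⟨q, 0, Or.inr ⟨rfl, rfl⟩, sum_balancedIdx (Nat.zero_le n)⟩
  · have hn : 0 < n := Nat.pos_of_ne_zero fun h => by simp [h] at hlt
    have hk : N % n < n := Nat.mod_lt N hn
    exact ⟨N / n, N % n, Or.inl ⟨Nat.div_lt_of_lt_mul hlt, hk⟩,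
      (sum_balancedIdx hk.le).trans (Nat.div_add_mod N n)⟩

lemma det_evalMat (M : Matrix (Fin n) (Fin n) ℝ[X]) (z : ℂ) :
    (evalMat M z).det = aeval z M.det :=
  (RingHom.map_det (aeval z : ℝ[X] →ₐ[ℝ] ℂ).toRingHom M).symm

/-- A polynomial version of a Wiener–Hopf factorisation of `b`, a matrix of degree `q`: here
`g(z) = s(z) f(z)` is itself a polynomial matrix, normalised to be column monic, and the degree of
`p` is as small as that of `b` permits. -/
structure IsColumnMonicFactorization (q : ℕ) (d : Fin n → ℕ)
    (b p g : Matrix (Fin n) (Fin n) ℝ[X]) : Prop where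
  eq_mul : b = p * g
  degree_lt : ∀ i j, (p i j).degree < (q + 1 - d j : ℕ)
  isColumnMonic : IsColumnMonic d g
  left_ne_zero : ∀ z : ℂ, ‖z‖ ≤ 1 → aeval z p.det ≠ 0
  right_ne_zero : ∀ z : ℂ, 1 ≤ ‖z‖ → aeval z g.det ≠ 0

lemma IsColumnMonic.natDegree_le_row {d : Fin n → ℕ} {g : Matrix (Fin n) (Fin n) ℝ[X]}
    (hg : IsColumnMonic d g) (hd : ∀ i j, d j ≤ d i + 1) (i j : Fin n) :
    (g i j).natDegree ≤ d i :=
  natDegree_le_iff_coeff_eq_zero.mpr fun m hm => by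
    rw [hg.coeff_eq i ((hd i j).trans hm), if_neg]
    rintro ⟨rfl, rfl⟩
    exact hm.false

lemma IsColumnMonic.det_leadingMatrix_row {d : Fin n → ℕ} {g : Matrix (Fin n) (Fin n) ℝ[X]}
    (hg : IsColumnMonic d g) (hd : Antitone d) : (leadingMatrix d 0 g).det = 1 := by
  rw [Matrix.det_of_isLowerTriangular]
  · simp [leadingMatrix, hg.coeff_eq]
  · intro i j hij
    have hij' : i < j := hij
    simp [leadingMatrix, hg.coeff_eq i (hd hij'.le), hij'.ne]

lemma IsColumnMonic.polyToRat_eq {g : Matrix (Fin n) (Fin n) ℝ[X]}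
    (hg : IsColumnMonic (balancedIdx n κ k) g) :
    polyToRat g =
      sMat n (idx n κ k) * invSub (reflectMatrix (balancedIdx n κ k) 0 g) := by
  ext i j
  have hij := aeval_reflect (K := RatFunc ℝ) RatFunc.X_ne_zero
    (hg.natDegree_le_row balancedIdx_le_succ i j)
  simp only [sMat, Matrix.diagonal_mul, polyToRat, invSub, Matrix.map_apply, reflectMatrix,
    Matrix.of_apply, Pi.zero_apply, add_zero, idx_eq_balancedIdx, zpow_natCast]
  rw [mul_comm, hij, RatFunc.aeval_X_left_eq_algebraMap]

namespace IsColumnMonicFactorization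

variable {q : ℕ} {b p g : Matrix (Fin n) (Fin n) ℝ[X]}

lemma det_ne_zero_of_norm_eq_one {d : Fin n → ℕ} (h : IsColumnMonicFactorization q d b p g)
    {z : ℂ} (hz : ‖z‖ = 1) : (evalMat b z).det ≠ 0 := by
  rw [det_evalMat, h.eq_mul, Matrix.det_mul, map_mul]
  exact mul_ne_zero (h.left_ne_zero z hz.le) (h.right_ne_zero z hz.ge)

lemma isWHF (h : IsColumnMonicFactorization q (balancedIdx n κ k) b p g) :
    IsWHF b p (reflectMatrix (balancedIdx n κ k) 0 g) (idx n κ k) where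
  p_noZero z hz := det_evalMat p z ▸ h.left_ne_zero z hz
  F_noZero := by
    have hdeg : ∀ i j, (g i j).natDegree ≤ balancedIdx n κ k i + (0 : Fin n → ℕ) j :=
      h.isColumnMonic.natDegree_le_row balancedIdx_le_succ
    have hlead := coeff_sum_det hdeg
    rw [h.isColumnMonic.det_leadingMatrix_row balancedIdx_antitone] at hlead
    intro w
    rw [det_evalMat, det_reflectMatrix hdeg]
    exact (aeval_reflect_ne_zero_iff (natDegree_det_le_sum hdeg)).mpr
      ⟨hlead ▸ one_ne_zero, h.right_ne_zero⟩ w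
  anti i j hij := by
    simp only [idx_eq_balancedIdx]
    exact_mod_cast balancedIdx_antitone hij
  eq := by
    rw [Matrix.mul_assoc, ← h.isColumnMonic.polyToRat_eq, h.eq_mul, polyToRat, Matrix.map_mul]
    rfl

end IsColumnMonicFactorization

end BalancedFactorization

section BilinearOpenMapping

variable {𝕜 E F G : Type*} [NontriviallyNormedField 𝕜] [CompleteSpace 𝕜]
  [NormedAddCommGroup E] [NormedSpace 𝕜 E] [FiniteDimensional 𝕜 E]
  [NormedAddCommGroup F] [NormedSpace 𝕜 F] [FiniteDimensional 𝕜 F]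
  [NormedAddCommGroup G] [NormedSpace 𝕜 G] [FiniteDimensional 𝕜 G]

lemma map_nhds_add_bilinear_eq (A : E →ₗ[𝕜] G) (B : E →ₗ[𝕜] F →ₗ[𝕜] G) (x : E × F)
    (hdim : Module.finrank 𝕜 E + Module.finrank 𝕜 F = Module.finrank 𝕜 G)
    (hinj : ∀ y : E × F, A y.1 + (B x.1 y.2 + B y.1 x.2) = 0 → y = 0) :
    Filter.map (fun y : E × F => A y.1 + B y.1 y.2) (nhds x) = nhds (A x.1 + B x.1 x.2) := by
  have hA := (LinearMap.toContinuousLinearMap A).hasStrictFDerivAt.comp x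
    (hasStrictFDerivAt_fst (𝕜 := 𝕜) (p := x))
  have hB := B.toContinuousBilinearMap.hasStrictFDerivAt_of_bilinear
    (hasStrictFDerivAt_fst (𝕜 := 𝕜) (p := x)) (hasStrictFDerivAt_snd (p := x))
  have := FiniteDimensional.complete 𝕜 E
  have := FiniteDimensional.complete 𝕜 F
  have := FiniteDimensional.complete 𝕜 G
  refine (hA.add hB).map_nhds_eq_of_surj ?_
  refine LinearMap.range_eq_top.mpr ((LinearMap.injective_iff_surjective_of_finrank_eq_finrank
    ?_).mp ((injective_iff_map_eq_zero _).mpr hinj))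
  rw [Module.finrank_prod, hdim]

end BilinearOpenMapping

section CoefficientSpaces

variable {n : ℕ}

lemma ofFn_toFn {K : Type*} [Field K] [DecidableEq K] {N : ℕ} {f : K[X]} (h : f.degree < N) :
    ofFn N (toFn N f) = f := by
  rcases Nat.eq_zero_or_pos N with rfl | hN
  · have hf : f = 0 := degree_eq_bot.mp (Nat.WithBot.lt_zero_iff.mp h)
    simp [hf]
  · refine ofFn_comp_toFn_eq_id_of_natDegree_lt ?_
    rcases eq_or_ne f 0 with rfl | hf
    · simpa using hN
    · exact (natDegree_lt_iff_degree_lt hf).mpr h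

/-- The coefficients of a polynomial matrix whose entries in column `j` have degree below `m j`. -/
abbrev ColumnCoeffs (m : Fin n → ℕ) : Type := ∀ _ j : Fin n, Fin (m j) → ℝ

/-- The polynomial matrix whose entries in column `j` have degree below `m j` and the prescribed
coefficients. -/
noncomputable def ofCoeffs (m : Fin n → ℕ) :
    ColumnCoeffs m →ₗ[ℝ] Matrix (Fin n) (Fin n) ℝ[X] where
  toFun e := Matrix.of fun i j => ofFn (m j) (e i j)
  map_add' e e' := by ext1; simp
  map_smul' a e := by ext1; simp

/-- The coefficients of degree below `m j` of the entries in column `j` of a polynomial matrix. -/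
noncomputable def toCoeffs (m : Fin n → ℕ) :
    Matrix (Fin n) (Fin n) ℝ[X] →ₗ[ℝ] ColumnCoeffs m where
  toFun M i j := toFn (m j) (M i j)
  map_add' M M' := by ext1; ext1; simp
  map_smul' a M := by ext1; ext1; simp

lemma ofCoeffs_apply (m : Fin n → ℕ) (e : ColumnCoeffs m) (i j : Fin n) :
    ofCoeffs m e i j = ofFn (m j) (e i j) := rfl

lemma ofCoeffs_toCoeffs {m : Fin n → ℕ} {M : Matrix (Fin n) (Fin n) ℝ[X]}
    (h : ∀ i j, (M i j).degree < m j) : ofCoeffs m (toCoeffs m M) = M := by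
  ext1 i j
  exact ofFn_toFn (h i j)

lemma degree_ofCoeffs_lt {m : Fin n → ℕ} (e : ColumnCoeffs m) (i j : Fin n) :
    (ofCoeffs m e i j).degree < m j :=
  ofFn_degree_lt _

lemma eq_zero_of_toCoeffs_eq_zero {m : Fin n → ℕ} {M : Matrix (Fin n) (Fin n) ℝ[X]}
    (h : ∀ i j, (M i j).degree < m j) (h0 : toCoeffs m M = 0) : M = 0 := by
  rw [← ofCoeffs_toCoeffs h, h0, map_zero]

lemma toCoeffs_ofCoeffs (m : Fin n → ℕ) (e : ColumnCoeffs m) :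
    toCoeffs m (ofCoeffs m e) = e := by
  ext1 i
  ext1 j
  exact toFn_comp_ofFn_eq_id (m j) (e i j)

lemma eq_zero_of_ofCoeffs_eq_zero {m : Fin n → ℕ} {e : ColumnCoeffs m}
    (h : ofCoeffs m e = 0) : e = 0 := by
  rw [← toCoeffs_ofCoeffs m e, h, map_zero]

lemma polyOf_eq_ofCoeffs {q : ℕ} (c : Fin (q + 1) → Matrix (Fin n) (Fin n) ℝ) :
    polyOf c = ofCoeffs (fun _ => q + 1) fun i j l => c l i j := by
  ext1 i j
  simp [polyOf, ofCoeffs_apply, ofFn_eq_sum_monomial, C_mul_X_pow_eq_monomial]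

lemma degree_polyOf_lt {q : ℕ} (c : Fin (q + 1) → Matrix (Fin n) (Fin n) ℝ) (i j : Fin n) :
    (polyOf c i j).degree < (q + 1 : ℕ) := by
  rw [polyOf_eq_ofCoeffs]
  exact ofFn_degree_lt _

lemma isContinuousFamily_ofCoeffs {Θ : Type*} [TopologicalSpace Θ] {m : Fin n → ℕ}
    {e : Θ → ColumnCoeffs m} (he : Continuous e) (i j : Fin n) :
    IsContinuousFamily fun θ => ofCoeffs m (e θ) i j :=
  isContinuousFamily_ofFn ((continuous_apply j).comp ((continuous_apply i).comp he))

lemma isContinuousFamily_polyOf {q : ℕ} (i j : Fin n) :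
    IsContinuousFamily fun c : Fin (q + 1) → Matrix (Fin n) (Fin n) ℝ => polyOf c i j := by
  simp only [polyOf_eq_ofCoeffs]
  exact isContinuousFamily_ofCoeffs (by fun_prop) i j

end CoefficientSpaces

section Openness

variable {n q : ℕ} {m d : Fin n → ℕ}

lemma isOpen_setOf_det_ne_zero : IsOpen {c : Fin (q + 1) → Matrix (Fin n) (Fin n) ℝ |
    ∀ z : ℂ, ‖z‖ = 1 → (evalMat (polyOf c) z).det ≠ 0} := by
  simpa [det_evalMat] using (IsContinuousFamily.det (isContinuousFamily_polyOf (n := n)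
    (q := q))).isOpen_forall_aeval_ne_zero (isCompact_sphere 0 1)

lemma isCoprime_of_forall_aeval_ne_zero {f g : ℝ[X]}
    (h : ∀ z : ℂ, aeval z f = 0 → aeval z g ≠ 0) : IsCoprime f g := by
  rw [← Polynomial.isCoprime_map (algebraMap ℝ ℂ),
    isCoprime_iff_aeval_ne_zero_of_isAlgClosed (K := ℂ) ℂ]
  intro z
  simpa [or_iff_not_imp_left] using h z

lemma degree_mul_lt {N : ℕ} (hmd : ∀ j, m j + d j = N)
    {p g : Matrix (Fin n) (Fin n) ℝ[X]} (hp : ∀ i j, (p i j).degree < m j)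
    (hg : ∀ i j, (g i j).natDegree ≤ d i)
    (i j : Fin n) : ((p * g) i j).degree < N := by
  rw [degree_lt_iff_coeff_zero]
  intro l hl
  rw [Matrix.mul_apply, finsetSum_coeff]
  refine Finset.sum_eq_zero fun t _ => coeff_eq_zero_of_degree_lt ?_
  rcases eq_or_ne (p i t) 0 with h0 | h0
  · simp [h0, bot_lt_iff_ne_bot]
  · have hit := hp i t
    rw [degree_eq_natDegree h0, Nat.cast_lt] at hit
    have := hg t j
    have := hmd t
    exact degree_le_natDegree.trans_lt (Nat.cast_lt.mpr
      ((natDegree_mul_le (p := p i t) (q := g t j)).trans_lt (by omega)))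

lemma IsColumnMonic.eq_zero_of_degree_mul_lt {Y g : Matrix (Fin n) (Fin n) ℝ[X]}
    (hg : IsColumnMonic d g) (h : ∀ i j, ((Y * g) i j).degree < d j) : Y = 0 := by
  ext1 i j
  have := degree_lt_of_degree_vecMul_lt (r := 0) (q := 0) (x := Y i)
    (by simpa using hg.natDegree_le) (by simp [hg.leadingMatrix_eq_one])
    (fun j => by rw [zero_add]; exact h i j) j
  exact degree_eq_bot.mp (Nat.WithBot.lt_zero_iff.mp (by simpa using this))

lemma eq_zero_of_mul_add_mul_eq_zero {p g P V : Matrix (Fin n) (Fin n) ℝ[X]}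
    (hg : IsColumnMonic d g) (hco : IsCoprime p.det g.det) (hV : ∀ i j, (V i j).degree < d j)
    (h : P * g + p * V = 0) : P = 0 ∧ V = 0 := by
  obtain ⟨u, v, huv⟩ := hco
  obtain ⟨Y, rfl⟩ : ∃ Y, V = Y * g := by
    refine ⟨v • (V * g.adjugate) - u • (p.adjugate * P), ?_⟩
    have h1 : p.adjugate * (P * g) = -(p.det • V) := by
      rw [eq_neg_of_add_eq_zero_left h, Matrix.mul_neg, ← Matrix.mul_assoc,
        Matrix.adjugate_mul, Matrix.smul_mul, Matrix.one_mul]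
    rw [Matrix.sub_mul, Matrix.smul_mul, Matrix.smul_mul, Matrix.mul_assoc, Matrix.adjugate_mul,
      Matrix.mul_assoc, h1, Matrix.mul_smul, Matrix.mul_one, smul_neg, sub_neg_eq_add, smul_smul,
      smul_smul, ← add_smul, add_comm, huv, one_smul]
  have hVg : Y * g = 0 := by rw [hg.eq_zero_of_degree_mul_lt hV, Matrix.zero_mul]
  refine ⟨?_, hVg⟩
  have hP : g.det • P = 0 := by
    rw [hVg, Matrix.mul_zero, add_zero] at h
    rw [← Matrix.mul_one P, ← Matrix.mul_smul, ← Matrix.mul_adjugate, ← Matrix.mul_assoc, h,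
      Matrix.zero_mul]
  exact (smul_eq_zero.mp hP).resolve_left hg.monic_det.ne_zero

/-- The linear part of `(P, W) ↦ P (diag(z ^ d) + W)`, in coefficients. -/
noncomputable def mulDiagonalCoeffs (N : ℕ) (m d : Fin n → ℕ) :
    ColumnCoeffs m →ₗ[ℝ] ColumnCoeffs (n := n) fun _ => N :=
  toCoeffs (fun _ => N) ∘ₗ
    LinearMap.mulRight ℝ (Matrix.diagonal fun j => (X : ℝ[X]) ^ d j) ∘ₗ ofCoeffs m

/-- The bilinear part of `(P, W) ↦ P (diag(z ^ d) + W)`, in coefficients. -/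
noncomputable def mulCoeffs (N : ℕ) (m d : Fin n → ℕ) :
    ColumnCoeffs m →ₗ[ℝ] ColumnCoeffs d →ₗ[ℝ] ColumnCoeffs (n := n) fun _ => N :=
  ((LinearMap.mul ℝ (Matrix (Fin n) (Fin n) ℝ[X])).compl₁₂ (ofCoeffs m) (ofCoeffs d)).compr₂
    (toCoeffs fun _ => N)

/-- The column monic matrix with the given coefficients below the leading ones. -/
noncomputable def columnMonicOf (d : Fin n → ℕ) (W : ColumnCoeffs d) :
    Matrix (Fin n) (Fin n) ℝ[X] :=
  Matrix.diagonal (fun j => (X : ℝ[X]) ^ d j) + ofCoeffs d W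

lemma isColumnMonic_columnMonicOf (W : ColumnCoeffs d) :
    IsColumnMonic d (columnMonicOf d W) := fun i j => by
  rw [columnMonicOf, Matrix.add_apply, add_sub_cancel_left]
  exact ofFn_degree_lt _

lemma IsColumnMonic.exists_columnMonicOf_eq {g : Matrix (Fin n) (Fin n) ℝ[X]}
    (hg : IsColumnMonic d g) : ∃ W, columnMonicOf d W = g := by
  have hdeg : ∀ i j, ((g - Matrix.diagonal fun j => (X : ℝ[X]) ^ d j) i j).degree < d j := hg
  exact ⟨toCoeffs d (g - Matrix.diagonal fun j => (X : ℝ[X]) ^ d j), by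
    rw [columnMonicOf, ofCoeffs_toCoeffs hdeg, add_sub_cancel]⟩

lemma isContinuousFamily_columnMonicOf {Θ : Type*} [TopologicalSpace Θ]
    {W : Θ → ColumnCoeffs d} (hW : Continuous W) (i j : Fin n) :
    IsContinuousFamily fun θ => columnMonicOf d (W θ) i j :=
  (isContinuousFamily_const _).add (isContinuousFamily_ofCoeffs hW i j)

lemma mulDiagonalCoeffs_add_mulCoeffs (N : ℕ) (P : ColumnCoeffs m) (W : ColumnCoeffs d) :
    mulDiagonalCoeffs N m d P + mulCoeffs N m d P W =
      toCoeffs (fun _ => N) (ofCoeffs m P * columnMonicOf d W) := by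
  rw [columnMonicOf, Matrix.mul_add, map_add]
  rfl

lemma map_nhds_mul_columnMonicOf {N : ℕ} (hmd : ∀ j, m j + d j = N)
    (hd : ∀ i j, d j ≤ d i + 1) (x : ColumnCoeffs m × ColumnCoeffs d)
    (hco : IsCoprime (ofCoeffs m x.1).det (columnMonicOf d x.2).det) :
    Filter.map (fun y : ColumnCoeffs m × ColumnCoeffs d =>
        toCoeffs (fun _ => N) (ofCoeffs m y.1 * columnMonicOf d y.2)) (nhds x) =
      nhds (toCoeffs (fun _ => N) (ofCoeffs m x.1 * columnMonicOf d x.2)) := by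
  simp only [← mulDiagonalCoeffs_add_mulCoeffs]
  refine map_nhds_add_bilinear_eq _ _ x ?_ fun y hy => ?_
  · simp [Module.finrank_pi_fintype, ← mul_add, ← Finset.sum_add_distrib, hmd]
  · have hg := isColumnMonic_columnMonicOf x.2
    have hW : ∀ i j, (ofCoeffs d y.2 i j).natDegree ≤ d i := fun i j =>
      natDegree_le_iff_coeff_eq_zero.mpr fun l hl => coeff_eq_zero_of_degree_lt
        ((degree_ofCoeffs_lt y.2 i j).trans_le (Nat.cast_le.mpr ((hd i j).trans hl)))
    obtain ⟨h1, h2⟩ := eq_zero_of_mul_add_mul_eq_zero (P := ofCoeffs m y.1) hg hco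
      (degree_ofCoeffs_lt y.2) <| by
        refine eq_zero_of_toCoeffs_eq_zero (m := fun _ => N) (fun i j => ?_) ?_
        · exact (degree_add_le _ _).trans_lt (max_lt
            (degree_mul_lt hmd (degree_ofCoeffs_lt y.1) (hg.natDegree_le_row hd) i j)
            (degree_mul_lt hmd (degree_ofCoeffs_lt x.1) hW i j))
        · rw [← hy, add_comm (mulCoeffs N m d x.1 y.2), ← add_assoc,
            mulDiagonalCoeffs_add_mulCoeffs, map_add]
          rfl
    exact Prod.ext (eq_zero_of_ofCoeffs_eq_zero h1) (eq_zero_of_ofCoeffs_eq_zero h2)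

lemma isOpen_setOf_left_right_ne_zero (m d : Fin n → ℕ) :
    IsOpen {x : ColumnCoeffs m × ColumnCoeffs d |
      (∀ z : ℂ, ‖z‖ ≤ 1 → aeval z (ofCoeffs m x.1).det ≠ 0) ∧
        ∀ z : ℂ, 1 ≤ ‖z‖ → aeval z (columnMonicOf d x.2).det ≠ 0} := by
  have hK := isCompact_closedBall (0 : ℂ) 1
  have hleft := (IsContinuousFamily.det (isContinuousFamily_ofCoeffs (continuous_fst
    (X := ColumnCoeffs m) (Y := ColumnCoeffs d)))).isOpen_forall_aeval_ne_zero hK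
  have hright := ((IsContinuousFamily.det (isContinuousFamily_columnMonicOf (continuous_snd
    (X := ColumnCoeffs m) (Y := ColumnCoeffs d)))).reflect
      (∑ j, d j)).isOpen_forall_aeval_ne_zero hK
  convert hleft.inter hright using 1
  ext x
  have hg := isColumnMonic_columnMonicOf x.2
  simp [aeval_reflect_ne_zero_iff hg.natDegree_det_le, hg.coeff_det]

/-- Coefficient tuples `c` for which `polyOf c` factors with indices `d`. -/
def factorizable (q : ℕ) (d : Fin n → ℕ) : Set (Fin (q + 1) → Matrix (Fin n) (Fin n) ℝ) :=
  {c | ∃ p g, IsColumnMonicFactorization q d (polyOf c) p g}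

lemma isOpen_factorizable (hd : ∀ i j, d j ≤ d i + 1) (hdq : ∀ j, d j ≤ q) :
    IsOpen (factorizable q d) := by
  rw [isOpen_iff_mem_nhds]
  rintro c ⟨p, g, h⟩
  obtain ⟨W, rfl⟩ := h.isColumnMonic.exists_columnMonicOf_eq
  obtain ⟨P, rfl⟩ : ∃ P, ofCoeffs _ P = p := ⟨_, ofCoeffs_toCoeffs h.degree_lt⟩
  have hco : IsCoprime (ofCoeffs _ P).det (columnMonicOf d W).det :=
    isCoprime_of_forall_aeval_ne_zero fun z hz =>
      h.right_ne_zero z (lt_of_not_ge fun hz' => h.left_ne_zero z hz' hz).le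
  have hmd : ∀ j, q + 1 - d j + d j = q + 1 := fun j => by have := hdq j; omega
  have hopen := (isOpen_setOf_left_right_ne_zero _ d).mem_nhds (x := (P, W))
    ⟨h.left_ne_zero, h.right_ne_zero⟩
  have himage := Filter.image_mem_map (m := fun y : _ × _ => toCoeffs (fun _ => q + 1)
    (ofCoeffs _ y.1 * columnMonicOf d y.2)) hopen
  have hcoeffs : ∀ c : Fin (q + 1) → Matrix (Fin n) (Fin n) ℝ,
      toCoeffs (fun _ => q + 1) (polyOf c) = fun i j l => c l i j := fun c => by
    rw [polyOf_eq_ofCoeffs, toCoeffs_ofCoeffs]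
  rw [map_nhds_mul_columnMonicOf hmd hd (P, W) hco, ← h.eq_mul, hcoeffs] at himage
  have hcont : Continuous fun (c : Fin (q + 1) → Matrix (Fin n) (Fin n) ℝ) (i j : Fin n) l =>
    c l i j := by fun_prop
  filter_upwards [hcont.continuousAt himage] with c' ⟨⟨P', W'⟩, ⟨hleft, hright⟩, hc'⟩
  have hg := isColumnMonic_columnMonicOf W'
  refine ⟨ofCoeffs _ P', columnMonicOf d W', ?_, degree_ofCoeffs_lt _, hg, hleft, hright⟩
  rw [polyOf_eq_ofCoeffs]
  exact (congrArg (ofCoeffs _) hc'.symm).trans (ofCoeffs_toCoeffs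
    (degree_mul_lt hmd (degree_ofCoeffs_lt _) (hg.natDegree_le_row hd)))

end Openness

section Splitting

lemma norm_eq_norm_of_irreducible {f : ℝ[X]} (hf : Irreducible f) {z w : ℂ} (hz : aeval z f = 0)
    (hw : aeval w f = 0) : ‖z‖ = ‖w‖ := by
  have : IsAlgClosure ℝ ℂ := ⟨inferInstance, Algebra.IsAlgebraic.of_finite ℝ ℂ⟩
  have : Normal ℝ ℂ := IsAlgClosure.normal ℝ ℂ
  have hconj : IsConjRoot ℝ z w :=
    (minpoly.eq_of_irreducible hf hz).symm.trans (minpoly.eq_of_irreducible hf hw)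
  obtain ⟨σ, rfl⟩ := isConjRoot_iff_exists_algEquiv.mp hconj
  rcases Complex.real_algHom_eq_id_or_conj σ with h | h
  · exact congrArg norm (DFunLike.congr_fun h w)
  · exact (congrArg norm (DFunLike.congr_fun h w)).trans (Complex.norm_conj w)

lemma exists_monic_mul_eq {f : ℝ[X]} (hf : ∀ z : ℂ, ‖z‖ = 1 → aeval z f ≠ 0) :
    ∃ χ ψ : ℝ[X], χ.Monic ∧ (∀ z : ℂ, 1 ≤ ‖z‖ → aeval z χ ≠ 0) ∧
      (∀ z : ℂ, ‖z‖ ≤ 1 → aeval z ψ ≠ 0) ∧ f = χ * ψ := by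
  induction f using UniqueFactorizationMonoid.induction_on_prime with
  | h₁ => exact absurd (map_zero _) (hf 1 (by simp))
  | h₂ u hu => exact ⟨1, u, monic_one, by simp, fun z _ => (hu.map (aeval z)).ne_zero, by simp⟩
  | h₃ f π _ hπ ih =>
    simp only [map_mul, mul_ne_zero_iff] at hf
    obtain ⟨χ, ψ, hχ, hχz, hψz, rfl⟩ := ih fun z hz => (hf z hz).2
    by_cases hroot : ∃ z : ℂ, aeval z π = 0 ∧ ‖z‖ < 1
    · obtain ⟨z, hz, hz1⟩ := hroot
      have hlead : π.leadingCoeff ≠ 0 := leadingCoeff_ne_zero.mpr hπ.ne_zero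
      refine ⟨π * C π.leadingCoeff⁻¹ * χ, C π.leadingCoeff * ψ,
        (monic_mul_leadingCoeff_inv hπ.ne_zero).mul hχ, fun w hw => ?_, fun w hw => ?_, ?_⟩
      · have hπw : aeval w π ≠ 0 := fun h0 =>
          (hw.trans_lt (norm_eq_norm_of_irreducible hπ.irreducible h0 hz ▸ hz1)).false
        simpa [hπw, hlead] using hχz w hw
      · simpa [hlead] using hψz w hw
      · have hC : C π.leadingCoeff⁻¹ * C π.leadingCoeff = 1 := by
          rw [← C_mul, inv_mul_cancel₀ hlead, C_1]
        linear_combination (-π * χ * ψ) * hC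
    · refine ⟨χ, π * ψ, hχ, hχz, fun w hw => ?_, by ring⟩
      rw [map_mul]
      refine mul_ne_zero (fun h0 => ?_) (hψz w hw)
      rcases hw.lt_or_eq with hw | hw
      · exact hroot ⟨w, h0, hw⟩
      · exact (hf w hw).1 h0

end Splitting

section Genericity

variable {K : Type*} [Field K]

lemma resultant_ne_zero_iff_isCoprime {f g : K[X]} {m l : ℕ} (hf : f.natDegree ≤ m)
    (hlead : f.coeff m ≠ 0) (hg : g.natDegree ≤ l) :
    resultant f g m l ≠ 0 ↔ IsCoprime f g := by
  obtain rfl : f.natDegree = m := hf.antisymm (le_natDegree_of_ne_zero hlead)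
  obtain ⟨k, rfl⟩ := Nat.exists_eq_add_of_le hg
  have hf0 : f ≠ 0 := fun h => hlead (by simp [h])
  rw [resultant_add_right_deg _ _ _ _ _ le_rfl, mul_ne_zero_iff_left (pow_ne_zero _ hlead), Ne,
    resultant_eq_zero_iff]
  simp [hf0]

lemma exists_ne_zero_forall_isCoprime {f g : K[X][X]} {m : ℕ} (hf : f.natDegree ≤ m) {t₀ : K}
    (hlead : (f.map (evalRingHom t₀)).coeff m ≠ 0)
    (hco : IsCoprime (f.map (evalRingHom t₀)) (g.map (evalRingHom t₀))) :
    ∃ Q : K[X], Q ≠ 0 ∧ ∀ t, Q.eval t ≠ 0 → (f.map (evalRingHom t)).coeff m ≠ 0 ∧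
      IsCoprime (f.map (evalRingHom t)) (g.map (evalRingHom t)) := by
  have hQ : ∀ t, (resultant f g m g.natDegree * f.coeff m).eval t ≠ 0 ↔
      (f.map (evalRingHom t)).coeff m ≠ 0 ∧
        IsCoprime (f.map (evalRingHom t)) (g.map (evalRingHom t)) := fun t => by
    rw [eval_mul, mul_ne_zero_iff, and_comm, coeff_map, coe_evalRingHom]
    refine and_congr_right fun h => ?_
    rw [← resultant_ne_zero_iff_isCoprime (natDegree_map_le.trans hf) (by rwa [coeff_map])
      natDegree_map_le, resultant_map_map, coe_evalRingHom]
  exact ⟨_, fun h0 => (hQ t₀).mpr ⟨hlead, hco⟩ (by rw [h0, eval_zero]), fun t => (hQ t).mp⟩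

lemma natDegree_add_C_smul_apply_le {R ι : Type*} [Semiring R] {q : ℕ} {b e : Matrix ι ι R[X]}
    (hb : ∀ i j, (b i j).natDegree ≤ q) (he : ∀ i j, (e i j).natDegree ≤ q) (t : R) (i j : ι) :
    ((b + C t • e) i j).natDegree ≤ q :=
  natDegree_add_le_of_degree_le (hb i j) ((natDegree_C_mul_le _ _).trans (he i j))

variable {ι : Type*} [Fintype ι] [DecidableEq ι]

/-- The genericity condition on a polynomial matrix `b` of degree at most `q` under which its
partial indices can be corrected by a perturbation: the coefficient of `z ^ q` is invertible and the
all-ones vector is a cyclic vector of the cokernel of `b`. -/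
structure IsGeneric (q : ℕ) (b : Matrix ι ι K[X]) : Prop where
  det_leadingMatrix_ne_zero : (leadingMatrix 0 (fun _ => q) b).det ≠ 0
  isCoprime : IsCoprime b.det (1 ⬝ᵥ (b.adjugate *ᵥ 1))

lemma isCoprime_prod_sum_prod_erase {R : Type*} [CommRing R] {f : ι → R}
    (h : Pairwise (Function.onFun IsCoprime f)) :
    IsCoprime (∏ i, f i) (∑ i, ∏ j ∈ Finset.univ.erase i, f j) := by
  refine IsCoprime.prod_left fun i _ => ?_
  obtain ⟨r, hr⟩ : f i ∣ ∑ l ∈ Finset.univ.erase i, ∏ j ∈ Finset.univ.erase l, f j :=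
    Finset.dvd_sum fun l hl => Finset.dvd_prod_of_mem f
      (Finset.mem_erase.mpr ⟨(Finset.ne_of_mem_erase hl).symm, Finset.mem_univ i⟩)
  rw [← Finset.add_sum_erase _ _ (Finset.mem_univ i), hr]
  exact IsCoprime.add_mul_left_right (IsCoprime.prod_right fun j hj =>
    h (Finset.ne_of_mem_erase hj).symm) r

lemma isGeneric_diagonal {q : ℕ} {f : ι → K[X]} (hlead : ∀ i, (f i).coeff q ≠ 0)
    (hco : Pairwise (Function.onFun IsCoprime f)) : IsGeneric q (Matrix.diagonal f) where
  det_leadingMatrix_ne_zero := by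
    have hdiag : leadingMatrix 0 (fun _ => q) (Matrix.diagonal f) =
        Matrix.diagonal fun i => (f i).coeff q := by
      ext i j
      rcases eq_or_ne i j with rfl | hij <;> simp [leadingMatrix, *]
    rw [hdiag, Matrix.det_diagonal]
    exact Finset.prod_ne_zero_iff.mpr fun i _ => hlead i
  isCoprime := by
    rw [Matrix.det_diagonal, Matrix.adjugate_diagonal]
    simpa [dotProduct, Matrix.mulVec_diagonal] using isCoprime_prod_sum_prod_erase hco

lemma IsGeneric.exists_forall_add_C_smul {q : ℕ} {b e : Matrix ι ι K[X]}
    (hb : ∀ i j, (b i j).natDegree ≤ q) (he : ∀ i j, (e i j).natDegree ≤ q)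
    (h : IsGeneric q (b + e)) :
    ∃ Q : K[X], Q ≠ 0 ∧ ∀ t, Q.eval t ≠ 0 → IsGeneric q (b + C t • e) := by
  let B : Matrix ι ι K[X][X] := b.map (mapRingHom C) + (C X : K[X][X]) • e.map (mapRingHom C)
  have hB : ∀ t, B.map (mapRingHom (evalRingHom t)) = b + C t • e := fun t => by
    have hid : (evalRingHom t).comp C = RingHom.id K := by ext; simp
    ext1 i j
    simp [B, Polynomial.map_map, hid]
  have hdet : ∀ t, B.det.map (evalRingHom t) = (b + C t • e).det := fun t => by
    rw [← coe_mapRingHom, RingHom.map_det, RingHom.mapMatrix_apply, hB]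
  have hadj : ∀ t, (1 ⬝ᵥ (B.adjugate *ᵥ 1)).map (evalRingHom t) =
      1 ⬝ᵥ ((b + C t • e).adjugate *ᵥ 1) := fun t => by
    rw [← hB, ← RingHom.mapMatrix_apply, ← RingHom.map_adjugate]
    simp [dotProduct, Matrix.mulVec, Polynomial.map_sum]
  have hline : ∀ t i j, ((b + C t • e) i j).natDegree ≤ (0 : ι → ℕ) i + q := fun t i j =>
    (natDegree_add_C_smul_apply_le hb he t i j).trans_eq (zero_add q).symm
  have hBdeg : ∀ i j, (B i j).natDegree ≤ (0 : ι → ℕ) i + q := fun i j =>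
    (natDegree_add_C_smul_apply_le (fun i j => natDegree_map_le.trans (hb i j))
      (fun i j => natDegree_map_le.trans (he i j)) X i j).trans_eq (zero_add q).symm
  have h1 : b + (C 1 : K[X]) • e = b + e := by rw [C_1, one_smul]
  obtain ⟨Q, hQ, hgen⟩ := exists_ne_zero_forall_isCoprime (g := 1 ⬝ᵥ (B.adjugate *ᵥ 1))
    (t₀ := 1) (natDegree_det_le_sum hBdeg)
    (by rw [hdet, coeff_sum_det (hline 1), h1]; exact h.det_leadingMatrix_ne_zero)
    (by rw [hdet, hadj, h1]; exact h.isCoprime)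
  refine ⟨Q, hQ, fun t ht => ?_⟩
  have := hgen t ht
  rw [hdet, hadj, coeff_sum_det (hline t)] at this
  exact ⟨this.1, this.2⟩

lemma isGeneric_diagonal_X_pow_add_C (n q : ℕ) :
    IsGeneric q (Matrix.diagonal fun i : Fin n => (X : ℝ[X]) ^ q + C (i : ℝ)) := by
  refine isGeneric_diagonal (fun i => ?_) fun i j hij => ?_
  · rcases Nat.eq_zero_or_pos q with rfl | hq
    · simp only [pow_zero, coeff_add, coeff_one_zero, coeff_C_zero]
      positivity
    · simp [hq.ne']
  · have hij' : (i : ℝ) - j ≠ 0 := sub_ne_zero.mpr (by exact_mod_cast Fin.val_ne_of_ne hij)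
    refine ⟨C ((i : ℝ) - j)⁻¹, -C ((i : ℝ) - j)⁻¹, ?_⟩
    have hC : C ((i : ℝ) - j)⁻¹ * (C (i : ℝ) - C (j : ℝ)) = 1 := by
      rw [← C_sub, ← C_mul, inv_mul_cancel₀ hij', C_1]
    linear_combination hC

end Genericity

section Residue

variable {K ι : Type*} [Field K] [Fintype ι] {χ : K[X]} {d : ι → ℕ} {a : ι → K[X]}
  {b g : Matrix ι ι K[X]}

lemma mk_vecMul_dotProduct (x : ι → K[X]) (hb : ∀ i, AdjoinRoot.mk χ ((b *ᵥ a) i) = 0) :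
    AdjoinRoot.mk χ ((x ᵥ* b) ⬝ᵥ a) = 0 := by
  rw [← Matrix.dotProduct_mulVec]
  simp [dotProduct, hb]

lemma IsColumnMonic.det_eq [DecidableEq ι] (hg : IsColumnMonic d g)
    (hχ : χ.Monic) (hd : ∑ j, d j = χ.natDegree) (hga : ∀ i, AdjoinRoot.mk χ ((g *ᵥ a) i) = 0)
    {w : ι → K[X]} (hw : AdjoinRoot.mk χ (w ⬝ᵥ a) = 1) : g.det = χ := by
  refine eq_of_monic_of_dvd_of_natDegree_le hχ hg.monic_det ?_ ?_
  · have := mk_vecMul_dotProduct (w ᵥ* g.adjugate) hga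
    rw [Matrix.vecMul_vecMul, Matrix.adjugate_mul, Matrix.vecMul_smul, Matrix.vecMul_one,
      smul_dotProduct, smul_eq_mul, map_mul, hw, mul_one] at this
    exact AdjoinRoot.mk_eq_zero.mp this
  · rw [hg.natDegree_det, hd]

variable [DecidableEq K]

/-- Reduction modulo `χ` of the combinations `∑ j, v j * a j` with `deg v j < d j`, where `v` is
given by its coefficients. It is used with `a` a generator of the cokernel of a polynomial matrix:
the row vectors annihilating `a` modulo `χ` are then the row space of the factor with
determinant `χ`. -/
noncomputable def residueMap (d : ι → ℕ) (χ : K[X]) (a : ι → K[X]) :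
    (∀ j, Fin (d j) → K) →ₗ[K] AdjoinRoot χ :=
  (AdjoinRoot.mkₐ χ).toLinearMap ∘ₗ
    ∑ j, LinearMap.mulRight K (a j) ∘ₗ ofFn (d j) ∘ₗ LinearMap.proj j

lemma residueMap_apply (a : ι → K[X]) (v : ∀ j, Fin (d j) → K) :
    residueMap d χ a v = AdjoinRoot.mk χ ((fun j => ofFn (d j) (v j)) ⬝ᵥ a) := by
  simp [residueMap, dotProduct]

lemma residueMap_toFn (a : ι → K[X]) {v : ι → K[X]} (hv : ∀ j, (v j).degree < d j) :
    residueMap d χ a (fun j => toFn (d j) (v j)) = AdjoinRoot.mk χ (v ⬝ᵥ a) := by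
  rw [residueMap_apply]
  simp only [fun j => ofFn_toFn (hv j)]

lemma residueMap_add_C_smul (a a' : ι → K[X]) (t : K) :
    residueMap d χ (a + C t • a') = residueMap d χ a + t • residueMap d χ a' := by
  ext1 v
  simp [residueMap_apply, dotProduct_add, dotProduct_smul, smul_eq_C_mul, AdjoinRoot.smul_mk]

lemma residueMap_injective_iff_surjective (hχ : χ.Monic) (hd : ∑ j, d j = χ.natDegree)
    (a : ι → K[X]) :
    Function.Injective (residueMap d χ a) ↔ Function.Surjective (residueMap d χ a) := by
  have := hχ.finite_adjoinRoot
  refine LinearMap.injective_iff_surjective_of_finrank_eq_finrank ?_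
  rw [(AdjoinRoot.powerBasis' hχ).finrank, AdjoinRoot.powerBasis'_dim, ← hd]
  simp [Module.finrank_pi_fintype]

-- With `a j = z ^ (d 0 + ⋯ + d (j - 1))` the coefficients in `v` are simply concatenated.
lemma exists_injective_residueMap {n : ℕ} {d : Fin n → ℕ} (hχ : χ.Monic)
    (hd : ∑ j, d j = χ.natDegree) : ∃ a, Function.Injective (residueMap d χ a) := by
  refine ⟨fun j => X ^ ∑ i : Fin j, d (Fin.castLE j.2.le i),
    (residueMap_injective_iff_surjective hχ hd _).mpr ?_⟩
  rw [← LinearMap.range_eq_top, ← top_le_iff, ← (AdjoinRoot.powerBasis' hχ).basis.span_eq,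
    Submodule.span_le]
  rintro _ ⟨m, rfl⟩
  obtain ⟨⟨j, l⟩, hjl⟩ := finSigmaFinEquiv.surjective
    (Fin.cast ((AdjoinRoot.powerBasis'_dim hχ).trans hd.symm) m)
  have hm : ∑ i : Fin j, d (Fin.castLE j.2.le i) + l = m := by
    rw [← finSigmaFinEquiv_apply ⟨j, l⟩, hjl, Fin.val_cast]
  refine ⟨fun i => toFn (d i) (Pi.single (M := fun _ => K[X]) j (X ^ (l : ℕ)) i), ?_⟩
  rw [residueMap_toFn, single_dotProduct, ← pow_add, add_comm, hm, PowerBasis.basis_eq_pow,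
    AdjoinRoot.powerBasis'_gen, map_pow, AdjoinRoot.mk_X]
  intro i
  rcases eq_or_ne i j with rfl | hij
  · rw [Pi.single_eq_same, degree_X_pow]
    exact_mod_cast l.2
  · rw [Pi.single_eq_of_ne hij, degree_zero]
    exact WithBot.bot_lt_coe _

variable [DecidableEq ι]

lemma residueMap_surjective {e : ι → ℕ} (hde : ∀ j, d j ≤ e j)
    (hdeg : ∀ i j, (b i j).natDegree ≤ d j) (hdet : IsUnit (leadingMatrix 0 d b).det)
    (hb : ∀ i, AdjoinRoot.mk χ ((b *ᵥ a) i) = 0) {w : ι → K[X]}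
    (hw : AdjoinRoot.mk χ (w ⬝ᵥ a) = 1) : Function.Surjective (residueMap e χ a) := by
  intro u
  obtain ⟨U, rfl⟩ := AdjoinRoot.mk_surjective u
  obtain ⟨x, r, hr, hUw⟩ := exists_eq_vecMul_add hdeg hdet (U • w)
  refine ⟨fun j => toFn (e j) (r j), ?_⟩
  rw [residueMap_toFn a fun j => (hr j).trans_le (by exact_mod_cast hde j)]
  have := congrArg (fun v => AdjoinRoot.mk χ (v ⬝ᵥ a)) hUw
  simpa [add_dotProduct, mk_vecMul_dotProduct x hb, hw] using this.symm

lemma exists_isColumnMonic_of_surjective (h : Function.Surjective (residueMap d χ a)) :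
    ∃ g, IsColumnMonic d g ∧ ∀ i, AdjoinRoot.mk χ ((g *ᵥ a) i) = 0 := by
  choose v hv using fun i => h (-AdjoinRoot.mk χ (X ^ d i * a i))
  refine ⟨Matrix.diagonal (fun j => X ^ d j) + Matrix.of fun i j => ofFn (d j) (v i j),
    fun i j => by simpa using ofFn_degree_lt _, fun i => ?_⟩
  have hrow : (Matrix.of (fun i j => ofFn (d j) (v i j)) *ᵥ a) i =
      (fun j => ofFn (d j) (v i j)) ⬝ᵥ a := rfl
  rw [Matrix.add_mulVec, Pi.add_apply, Matrix.mulVec_diagonal, hrow, map_add, ← residueMap_apply,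
    hv, add_neg_cancel]

lemma IsColumnMonic.exists_eq_vecMul (hg : IsColumnMonic d g)
    (hinj : Function.Injective (residueMap d χ a)) (hga : ∀ i, AdjoinRoot.mk χ ((g *ᵥ a) i) = 0)
    {v : ι → K[X]} (hv : AdjoinRoot.mk χ (v ⬝ᵥ a) = 0) : ∃ x, v = x ᵥ* g := by
  obtain ⟨x, r, hr, rfl⟩ := exists_eq_vecMul_add hg.natDegree_le
    (by rw [hg.leadingMatrix_eq_one, Matrix.det_one]; exact isUnit_one) v
  rw [add_dotProduct, map_add, mk_vecMul_dotProduct x hga, zero_add, ← residueMap_toFn a hr] at hv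
  have hr0 : r = 0 := by
    ext1 j
    rw [← ofFn_toFn (hr j), congrFun (hinj (hv.trans (map_zero _).symm)) j]
    simp
  exact ⟨x, by rw [hr0, add_zero]⟩

lemma exists_eq_mul_isColumnMonic (hχ : χ.Monic) (hd : ∑ j, d j = χ.natDegree)
    (hinj : Function.Injective (residueMap d χ a))
    (hb : ∀ i, AdjoinRoot.mk χ ((b *ᵥ a) i) = 0) :
    ∃ p g, b = p * g ∧ IsColumnMonic d g ∧ g.det = χ := by
  have hsurj := (residueMap_injective_iff_surjective hχ hd a).mp hinj
  obtain ⟨g, hg, hga⟩ := exists_isColumnMonic_of_surjective hsurj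
  choose p hp using fun i => hg.exists_eq_vecMul hinj hga (hb i)
  obtain ⟨w, hw⟩ := hsurj 1
  rw [residueMap_apply] at hw
  exact ⟨Matrix.of p, g, Matrix.ext fun i j => congrFun (hp i) j, hg, hg.det_eq hχ hd hga hw⟩

end Residue

section Perturbation

lemma finite_setOf_not_injective_add_smul {K V W : Type*} [Field K] [AddCommGroup V] [Module K V]
    [FiniteDimensional K V] [AddCommGroup W] [Module K W] (T : V →ₗ[K] W) (D : V ≃ₗ[K] W) :
    {t : K | ¬ Function.Injective (T + t • D.toLinearMap)}.Finite := by
  have hfin := (Module.End.finite_hasEigenvalue (D.symm.toLinearMap ∘ₗ T)).preimage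
    neg_injective.injOn
  refine hfin.subset fun t ht => ?_
  simp only [Set.mem_ofPred_eq, injective_iff_map_eq_zero, not_forall] at ht
  obtain ⟨v, hv, hv0⟩ := ht
  refine Module.End.hasEigenvalue_of_hasEigenvector (x := v)
    ⟨Module.End.mem_eigenspace_iff.mpr ?_, hv0⟩
  have hTv : T v = -(t • D v) := eq_neg_of_add_eq_zero_left hv
  simp [hTv]

-- If `R` is a right inverse of `T`, then `y t = (1 + t R D)⁻¹ x` works.
lemma exists_tendsto_eventually_add_smul_eq_zero {𝕜 E F : Type*} [NontriviallyNormedField 𝕜]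
    [CompleteSpace 𝕜] [NormedAddCommGroup E] [NormedSpace 𝕜 E] [FiniteDimensional 𝕜 E]
    [AddCommGroup F] [Module 𝕜 F] {T : E →ₗ[𝕜] F} (D : E →ₗ[𝕜] F) (hT : Function.Surjective T)
    {x : E} (hx : T x = 0) :
    ∃ y : 𝕜 → E, Filter.Tendsto y (nhds 0) (nhds x) ∧
      ∀ᶠ t in nhds 0, (T + t • D) (y t) = 0 := by
  obtain ⟨R, hR⟩ := T.exists_rightInverse_of_surjective (LinearMap.range_eq_top.mpr hT)
  let L : E →L[𝕜] E := LinearMap.toContinuousLinearMap (R ∘ₗ D)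
  have := FiniteDimensional.complete 𝕜 E
  have hcont : ContinuousAt (fun t : 𝕜 => 1 + t • L) 0 := by fun_prop
  have hinv : ContinuousAt (fun t : 𝕜 => Ring.inverse (1 + t • L)) 0 :=
    ContinuousAt.comp (g := Ring.inverse)
      (by simpa using NormedRing.inverse_continuousAt (1 : (E →L[𝕜] E)ˣ)) hcont
  refine ⟨fun t => Ring.inverse (1 + t • L) x, ?_, ?_⟩
  · simpa [ContinuousAt] using hinv.clm_apply (continuousAt_const (y := x))
  · have hunit : ∀ᶠ t : 𝕜 in nhds 0, IsUnit (1 + t • L) :=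
      hcont.eventually_mem (Units.isOpen.mem_nhds (by simp))
    filter_upwards [hunit] with t ht
    have hy := congrArg T (DFunLike.congr_fun (Ring.mul_inverse_cancel _ ht) x)
    have hTL : ∀ v, T (L v) = D v := fun v => DFunLike.congr_fun hR (D v)
    simpa [hTL, hx] using hy

end Perturbation

section Density

variable {n q : ℕ}

lemma natDegree_polyOf_le (c : Fin (q + 1) → Matrix (Fin n) (Fin n) ℝ) (i j : Fin n) :
    (polyOf c i j).natDegree ≤ q :=
  natDegree_le_iff_degree_le.mpr (Order.lt_succ_iff.mp (degree_polyOf_lt c i j))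

lemma polyOf_add_smul (c e : Fin (q + 1) → Matrix (Fin n) (Fin n) ℝ) (t : ℝ) :
    polyOf (c + t • e) = polyOf c + C t • polyOf e := by
  ext1 i j
  simp [polyOf, add_mul, Finset.sum_add_distrib, Finset.mul_sum, mul_assoc]

lemma exists_polyOf_eq {M : Matrix (Fin n) (Fin n) ℝ[X]} (h : ∀ i j, (M i j).natDegree ≤ q) :
    ∃ c : Fin (q + 1) → Matrix (Fin n) (Fin n) ℝ, polyOf c = M := by
  refine ⟨fun l => Matrix.of fun i j => toCoeffs (fun _ => q + 1) M i j l, ?_⟩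
  rw [polyOf_eq_ofCoeffs]
  exact ofCoeffs_toCoeffs fun i j =>
    (degree_le_of_natDegree_le (h i j)).trans_lt (by exact_mod_cast q.lt_succ_self)

lemma mem_closure_setOf_isGeneric (c : Fin (q + 1) → Matrix (Fin n) (Fin n) ℝ) :
    c ∈ closure {c : Fin (q + 1) → Matrix (Fin n) (Fin n) ℝ | IsGeneric q (polyOf c)} := by
  obtain ⟨e, he⟩ := exists_polyOf_eq (q := q)
    (M := Matrix.diagonal (fun i : Fin n => X ^ q + C (i : ℝ)) - polyOf c) fun i j => by
      refine (natDegree_sub_le_of_le ?_ (natDegree_polyOf_le c i j)).trans (max_self q).le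
      rw [Matrix.diagonal_apply]
      split_ifs
      · exact (natDegree_X_pow_add_C).le
      · exact natDegree_zero.trans_le q.zero_le
  obtain ⟨Q, hQ, hgen⟩ := IsGeneric.exists_forall_add_C_smul (natDegree_polyOf_le c)
    (natDegree_polyOf_le e) (by
      rw [he, add_sub_cancel]
      exact isGeneric_diagonal_X_pow_add_C n q)
  have hline : Filter.Tendsto (fun t : ℝ => c + t • e) (nhdsWithin 0 {0}ᶜ) (nhds c) := by
    have : Continuous fun t : ℝ => c + t • e := by fun_prop
    simpa using (this.tendsto 0).mono_left nhdsWithin_le_nhds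
  have hroots : ∀ᶠ t in nhdsWithin (0 : ℝ) {0}ᶜ, Q.eval t ≠ 0 :=
    nhdsNE_le_cofinite 0 (finite_setOfPred_isRoot hQ).compl_mem_cofinite
  refine mem_closure_of_tendsto hline (hroots.mono fun t ht => ?_)
  simpa [polyOf_add_smul] using hgen t ht

lemma isColumnMonicFactorization_of_injective {d : Fin n → ℕ} {b : Matrix (Fin n) (Fin n) ℝ[X]}
    {χ : ℝ[X]} {a : Fin n → ℝ[X]} (hbq : ∀ i j, (b i j).degree < (q + 1 : ℕ)) (hχ : χ.Monic)
    (hχz : ∀ z : ℂ, 1 ≤ ‖z‖ → aeval z χ ≠ 0) (hd : ∑ j, d j = χ.natDegree) (hanti : Antitone d)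
    (hsucc : ∀ i j, d j ≤ d i + 1) (hinj : Function.Injective (residueMap d χ a))
    (hb : ∀ i, AdjoinRoot.mk χ ((b *ᵥ a) i) = 0)
    (hbz : ∀ z : ℂ, ‖z‖ ≤ 1 → aeval z (b.det /ₘ χ) ≠ 0) :
    ∃ p g, IsColumnMonicFactorization q d b p g := by
  obtain ⟨p, g, hbpg, hg, hdet⟩ := exists_eq_mul_isColumnMonic hχ hd hinj hb
  have hp : p.det = b.det /ₘ χ := by
    rw [hbpg, Matrix.det_mul, hdet, mul_comm, mul_divByMonic_cancel_left _ hχ]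
  refine ⟨p, g, hbpg, fun i => degree_lt_of_degree_vecMul_lt (s := 0)
    (hg.natDegree_le_row hsucc) ?_ fun j => ?_, hg, hp ▸ hbz, hdet ▸ hχz⟩
  · rw [hg.det_leadingMatrix_row hanti]
    exact one_ne_zero
  · have := hbq i j
    rwa [hbpg] at this

lemma residueMap_apply_row (χ : ℝ[X]) (a : Fin n → ℝ[X])
    (c : Fin (q + 1) → Matrix (Fin n) (Fin n) ℝ) (i : Fin n) :
    residueMap (fun _ => q + 1) χ a (fun j l => c l i j) =
      AdjoinRoot.mk χ ((polyOf c *ᵥ a) i) := by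
  rw [residueMap_apply, polyOf_eq_ofCoeffs]
  rfl

lemma exists_tendsto_mk_mulVec_eq_zero {χ : ℝ[X]} {a : Fin n → ℝ[X]} (a' : Fin n → ℝ[X])
    {c : Fin (q + 1) → Matrix (Fin n) (Fin n) ℝ}
    (hsurj : Function.Surjective (residueMap (fun _ => q + 1) χ a))
    (hc : ∀ i, AdjoinRoot.mk χ ((polyOf c *ᵥ a) i) = 0) :
    ∃ c' : ℝ → Fin (q + 1) → Matrix (Fin n) (Fin n) ℝ, Filter.Tendsto c' (nhds 0) (nhds c) ∧
      ∀ᶠ t in nhds 0, ∀ i, AdjoinRoot.mk χ ((polyOf (c' t) *ᵥ (a + C t • a')) i) = 0 := by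
  choose y hy hy0 using fun i => exists_tendsto_eventually_add_smul_eq_zero
    (residueMap (fun _ => q + 1) χ a') hsurj ((residueMap_apply_row χ a c i).trans (hc i))
  refine ⟨fun t l => Matrix.of fun i j => y i t j l, ?_, ?_⟩
  · exact tendsto_pi_nhds.mpr fun l => tendsto_pi_nhds.mpr fun i => tendsto_pi_nhds.mpr fun j =>
      tendsto_pi_nhds.mp (tendsto_pi_nhds.mp (hy i) j) l
  · filter_upwards [Filter.eventually_all.mpr hy0] with t ht i
    rw [← residueMap_apply_row, residueMap_add_C_smul]
    exact ht i

lemma IsGeneric.exists_surjective_residueMap {c : Fin (q + 1) → Matrix (Fin n) (Fin n) ℝ}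
    (h : IsGeneric q (polyOf c)) {χ : ℝ[X]} (hχ : χ ∣ (polyOf c).det) :
    ∃ a, Function.Surjective (residueMap (fun _ => q + 1) χ a) ∧
      ∀ i, AdjoinRoot.mk χ ((polyOf c *ᵥ a) i) = 0 := by
  have hdet : AdjoinRoot.mk χ (polyOf c).det = 0 := AdjoinRoot.mk_eq_zero.mpr hχ
  have hc : ∀ i, AdjoinRoot.mk χ ((polyOf c *ᵥ ((polyOf c).adjugate *ᵥ 1)) i) = 0 := fun i => by
    simp [Matrix.mulVec_mulVec, Matrix.mul_adjugate, Matrix.smul_mulVec, hdet]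
  obtain ⟨u, v, huv⟩ := h.isCoprime
  have hv : AdjoinRoot.mk χ ((v • 1) ⬝ᵥ ((polyOf c).adjugate *ᵥ 1)) = 1 := by
    simpa [hdet] using congrArg (AdjoinRoot.mk χ) huv
  exact ⟨_, residueMap_surjective (fun _ => q.le_succ) (natDegree_polyOf_le c)
    h.det_leadingMatrix_ne_zero.isUnit hc hv, hc⟩

lemma IsGeneric.mem_closure_factorizable {c : Fin (q + 1) → Matrix (Fin n) (Fin n) ℝ}
    (h : IsGeneric q (polyOf c)) {χ ψ : ℝ[X]} (hχ : χ.Monic)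
    (hχz : ∀ z : ℂ, 1 ≤ ‖z‖ → aeval z χ ≠ 0) (hψz : ∀ z : ℂ, ‖z‖ ≤ 1 → aeval z ψ ≠ 0)
    (hdet : (polyOf c).det = χ * ψ) {d : Fin n → ℕ} (hd : ∑ j, d j = χ.natDegree)
    (hanti : Antitone d) (hsucc : ∀ i j, d j ≤ d i + 1) : c ∈ closure (factorizable q d) := by
  obtain ⟨a, hsurj, hc⟩ := h.exists_surjective_residueMap (Dvd.intro ψ hdet.symm)
  obtain ⟨a', ha'⟩ := exists_injective_residueMap hχ hd
  obtain ⟨c', hc', hzero⟩ := exists_tendsto_mk_mulVec_eq_zero a' hsurj hc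
  have hinj : ∀ᶠ t in nhdsWithin (0 : ℝ) {0}ᶜ,
      Function.Injective (residueMap d χ (a + C t • a')) := by
    have := finite_setOf_not_injective_add_smul (residueMap d χ a) (LinearEquiv.ofBijective _
      ⟨ha', (residueMap_injective_iff_surjective hχ hd a').mp ha'⟩)
    filter_upwards [nhdsNE_le_cofinite 0 this.compl_mem_cofinite] with t ht
    rw [residueMap_add_C_smul]
    exact not_not.mp ht
  have hopen := ((IsContinuousFamily.det (isContinuousFamily_polyOf (n := n)
    (q := q))).divByMonic hχ).isOpen_forall_aeval_ne_zero (isCompact_closedBall (0 : ℂ) 1)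
  have hquot := hc' (hopen.mem_nhds (by
    simpa [hdet, mul_divByMonic_cancel_left _ hχ] using hψz))
  refine mem_closure_of_tendsto (hc'.mono_left (nhdsWithin_le_nhds (s := {0}ᶜ))) ?_
  filter_upwards [hinj, nhdsWithin_le_nhds hzero, nhdsWithin_le_nhds hquot] with t hinj hzero hquot
  exact isColumnMonicFactorization_of_injective (degree_polyOf_lt _) hχ hχz hd hanti hsucc hinj
    hzero fun z hz => hquot z (by simpa using hz)

lemma IsGeneric.exists_mem_closure_factorizable {c : Fin (q + 1) → Matrix (Fin n) (Fin n) ℝ}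
    (h : IsGeneric q (polyOf c)) (hc : ∀ z : ℂ, ‖z‖ = 1 → (evalMat (polyOf c) z).det ≠ 0) :
    ∃ κ k, ((κ < q ∧ k < n) ∨ (κ = q ∧ k = 0)) ∧
      c ∈ closure (factorizable q (balancedIdx n κ k)) := by
  simp only [det_evalMat] at hc
  obtain ⟨χ, ψ, hχ, hχz, hψz, hdet⟩ := exists_monic_mul_eq hc
  have hχdeg : χ.natDegree ≤ n * q := by
    have hne : (polyOf c).det ≠ 0 := fun h0 => hc 1 (by simp) (by rw [h0, map_zero])
    have hle := natDegree_det_le_sum (r := 0) (s := fun _ => q) (g := polyOf c) (by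
      simpa using natDegree_polyOf_le c)
    exact (natDegree_le_of_dvd (Dvd.intro ψ hdet.symm) hne).trans (by simpa using hle)
  obtain ⟨κ, k, htype, hsum⟩ := exists_sum_balancedIdx_eq hχdeg
  exact ⟨κ, k, htype, h.mem_closure_factorizable hχ hχz hψz hdet hsum balancedIdx_antitone
    balancedIdx_le_succ⟩

end Density

/-- genericity of WHFs with partial indices of type (κ,k). -/
theorem stmt3 {n q : ℕ} :
    IsOpen {c : Fin (q + 1) → Matrix (Fin n) (Fin n) ℝ |
      ∀ z : ℂ, ‖z‖ = 1 → (evalMat (polyOf c) z).det ≠ 0} ∧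
    ∃ U : Set (Fin (q + 1) → Matrix (Fin n) (Fin n) ℝ),
      U ⊆ {c | ∀ z : ℂ, ‖z‖ = 1 → (evalMat (polyOf c) z).det ≠ 0} ∧
      IsOpen U ∧
      {c : Fin (q + 1) → Matrix (Fin n) (Fin n) ℝ |
        ∀ z : ℂ, ‖z‖ = 1 → (evalMat (polyOf c) z).det ≠ 0} ⊆ closure U ∧
      ∀ c ∈ U, ∃ (κ k : ℕ) (p F : Matrix (Fin n) (Fin n) (Polynomial ℝ)),
        ((κ < q ∧ k < n) ∨ (κ = q ∧ k = 0)) ∧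
        IsWHF (polyOf c) p F (idx n κ k) := by
  refine ⟨isOpen_setOf_det_ne_zero, ⋃ (κ : ℕ) (k : ℕ) (_ : (κ < q ∧ k < n) ∨ (κ = q ∧ k = 0)),
    factorizable q (balancedIdx n κ k), ?_, ?_, fun c hc => ?_, ?_⟩
  · simp only [Set.iUnion_subset_iff]
    rintro κ k - c ⟨p, g, h⟩ z hz
    exact h.det_ne_zero_of_norm_eq_one hz
  · exact isOpen_iUnion fun κ => isOpen_iUnion fun k => isOpen_iUnion fun htype =>
      isOpen_factorizable balancedIdx_le_succ (balancedIdx_le htype)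
  · refine closure_minimal ?_ isClosed_closure
      (isOpen_setOf_det_ne_zero.inter_closure ⟨hc, mem_closure_setOf_isGeneric c⟩)
    rintro c' ⟨hc', hgen⟩
    obtain ⟨κ, k, htype, hmem⟩ := IsGeneric.exists_mem_closure_factorizable hgen hc'
    exact closure_mono (Set.subset_iUnion₂_of_subset κ k
      (Set.subset_iUnion (fun _ => factorizable q (balancedIdx n κ k)) htype)) hmem
  · simp only [Set.mem_iUnion]
    rintro c ⟨κ, k, htype, p, g, h⟩
    exact ⟨κ, k, p, _, htype, h.isWHF⟩
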